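/- If A is a finite-dimensional unital C*-subalgebra of B(H) (i.e., a star-closed subalgebra containing I that is finite-dimensional as a complex vector space), then there exists a unital completely positive linear map Φ : B(H) → B(H) such that Φ ∘ Φ = Φ, the range of Φ equals the commutant A', and Φ(R₁ B R₂) = R₁ Φ(B) R₂ for all R₁, R₂ ∈ A' and all B ∈ B(H). -/

import Mathlib

open scoped InnerProductSpace ComplexOrder

noncomputable section

variable {H : Type*} [NormedAddCommGroup H] [InnerProductSpace ℂ H] [CompleteSpace H]

/-- Positivity of an `n × n` matrix of operators on `H`, expressed as positivity of the
corresponding operator on the `n`-fold Hilbert sum `H^n`:  `M ≥ 0` iff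
`∑ i j, ⟨v i, M i j (v j)⟩ ≥ 0` for every `v ∈ H^n`. -/
def OpMatrixNonneg {n : ℕ} (M : Matrix (Fin n) (Fin n) (H →L[ℂ] H)) : Prop :=
  ∀ v : Fin n → H, 0 ≤ ∑ i, ∑ j, ⟪v i, M i j (v j)⟫_ℂ

/-- A map `Φ : B(H) → B(H)` is completely positive if it is (complex) linear and, for every
`n ∈ ℕ`, its entrywise application to positive `n × n` matrices over `B(H)` (identified
with operators on `H^n`) preserves positivity. -/
def IsCompletelyPositiveMap (Φ : (H →L[ℂ] H) → (H →L[ℂ] H)) : Prop :=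
  IsLinearMap ℂ Φ ∧ ∀ (n : ℕ) (M : Matrix (Fin n) (Fin n) (H →L[ℂ] H)),
    OpMatrixNonneg M → OpMatrixNonneg (M.map Φ)

/-!
The compact group `unitary A` carries a Haar probability measure, and averaging `u * B * star u`
over it produces an operator commuting with every unitary of `A`, hence with `A`, which is spanned
by its unitaries. Operators commuting with `A` can be pulled out of the average, and an average of
the completely positive maps `B ↦ u * B * star u` is completely positive.
-/

open MeasureTheory

theorem compactSpace_unitary (E : Type*) [NormedRing E] [StarRing E] [CStarRing E]
    [ProperSpace E] : CompactSpace (unitary E) := by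
  have unitary_subset_closedBall : (unitary E : Set E) ⊆ Metric.closedBall 0 1 := by
    intro x hx
    rw [mem_closedBall_zero_iff]
    cases subsingleton_or_nontrivial E
    · simp [Subsingleton.elim x 0]
    · exact (CStarRing.norm_of_mem_unitary hx).le
  exact isCompact_iff_compactSpace.mp <| Metric.isCompact_of_isClosed_isBounded isClosed_unitary <|
    Metric.isBounded_closedBall.subset unitary_subset_closedBall

theorem centralizer_image_unitary {A B : Type*} [CStarAlgebra A] [Semiring B] [Algebra ℂ B]
    (φ : A →ₗ[ℂ] B) : Set.centralizer (φ '' unitary A) = Set.centralizer (Set.range φ) := by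
  refine Set.Subset.antisymm ?_ (Set.centralizer_subset (Set.image_subset_range _ _))
  rintro b hb _ ⟨a, rfl⟩
  have ha : a ∈ Submodule.span ℂ (unitary A : Set A) := by simp [CStarAlgebra.span_unitary]
  induction ha using Submodule.span_induction with
  | mem a ha => exact hb _ (Set.mem_image_of_mem φ ha)
  | zero => simp
  | add a a' _ _ ha ha' => simp [add_mul, mul_add, ha, ha']
  | smul c a _ ha => simp [ha]

theorem isProbabilityMeasure_haarMeasure_top (G : Type*) [Group G] [TopologicalSpace G]
    [IsTopologicalGroup G] [CompactSpace G] [MeasurableSpace G] [BorelSpace G] :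
    IsProbabilityMeasure (Measure.haarMeasure (⊤ : TopologicalSpace.PositiveCompacts G)) :=
  ⟨by simpa using Measure.haarMeasure_self (K₀ := (⊤ : TopologicalSpace.PositiveCompacts G))⟩

section UnitaryAverage

variable {G E : Type*} [Group G] [MeasurableSpace G] [NormedRing E] [StarRing E]

theorem integrable_unitary_conj [TopologicalSpace G] [CompactSpace G] [OpensMeasurableSpace G]
    [ContinuousStar E] (μ : Measure G) [IsFiniteMeasure μ] {u : G →* unitary E}
    (hu : Continuous u) (B : E) : Integrable (fun g => (u g : E) * B * star (u g : E)) μ :=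
  Continuous.integrable_of_hasCompactSupport (by fun_prop) (.of_compactSpace _)

variable [NormedAlgebra ℝ E]

/-- The average (twirl) of `B` over the unitary representation `u` with respect to `μ`. When `μ` is
the Haar probability measure of a compact group, it is the conditional expectation onto the
commutant of `u`. -/
def unitaryAverage (μ : Measure G) (u : G →* unitary E) (B : E) : E :=
  ∫ g, (u g : E) * B * star (u g : E) ∂μ

theorem unitaryAverage_one [CompleteSpace E] (μ : Measure G) [IsProbabilityMeasure μ]
    (u : G →* unitary E) : unitaryAverage μ u 1 = 1 := by
  simp [unitaryAverage]

variable [TopologicalSpace G] [CompactSpace G] [OpensMeasurableSpace G] [ContinuousStar E]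
  (μ : Measure G) {u : G →* unitary E}

theorem isLinearMap_unitaryAverage (𝕜 : Type*) [NormedField 𝕜] [NormedAlgebra 𝕜 E]
    [SMulCommClass ℝ 𝕜 E] [IsFiniteMeasure μ] (hu : Continuous u) :
    IsLinearMap 𝕜 (unitaryAverage μ u) where
  map_add B C := by
    simp only [unitaryAverage, mul_add, add_mul]
    exact integral_add (integrable_unitary_conj μ hu B) (integrable_unitary_conj μ hu C)
  map_smul c B := by
    simp only [unitaryAverage, mul_smul_comm, smul_mul_assoc]
    exact integral_smul c _

theorem unitaryAverage_mem_centralizer [MeasurableMul G] [IsFiniteMeasure μ]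
    [μ.IsMulLeftInvariant] (hu : Continuous u) (B : E) :
    unitaryAverage μ u B ∈ Set.centralizer (Set.range fun g => (u g : E)) := by
  rintro _ ⟨h, rfl⟩
  calc (u h : E) * unitaryAverage μ u B
      = ∫ g, (u h : E) * ((u g : E) * B * star (u g : E)) ∂μ :=
        (integral_const_mul_of_integrable (integrable_unitary_conj μ hu B)).symm
    _ = ∫ g, (u (h * g) : E) * B * star (u (h * g) : E) * (u h : E) ∂μ := by
        simp [mul_assoc]
    _ = ∫ g, (u g : E) * B * star (u g : E) * (u h : E) ∂μ :=
        integral_mul_left_eq_self (fun g => (u g : E) * B * star (u g : E) * (u h : E)) h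
    _ = unitaryAverage μ u B * (u h : E) :=
        integral_mul_const_of_integrable (integrable_unitary_conj μ hu B)

theorem unitaryAverage_mul_mul [IsFiniteMeasure μ] (hu : Continuous u) {R₁ R₂ : E}
    (hR₁ : R₁ ∈ Set.centralizer (Set.range fun g => (u g : E)))
    (hR₂ : R₂ ∈ Set.centralizer (Set.range fun g => (u g : E))) (B : E) :
    unitaryAverage μ u (R₁ * B * R₂) = R₁ * unitaryAverage μ u B * R₂ := by
  have conj_mul_mul (g : G) : (u g : E) * (R₁ * B * R₂) * star (u g : E) =
      R₁ * ((u g : E) * B * star (u g : E)) * R₂ := by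
    have comm₁ : (u g : E) * R₁ = R₁ * u g := hR₁ _ ⟨g, rfl⟩
    have comm₂ : star (u g : E) * R₂ = R₂ * star (u g : E) := by
      simpa [← Unitary.star_eq_inv] using hR₂ _ ⟨g⁻¹, rfl⟩
    calc (u g : E) * (R₁ * B * R₂) * star (u g : E)
        = (u g * R₁) * B * (R₂ * star (u g : E)) := by simp only [mul_assoc]
      _ = R₁ * (u g * B * star (u g : E)) * R₂ := by
        rw [comm₁, ← comm₂]
        simp only [mul_assoc]
  have conj_integrable := integrable_unitary_conj μ hu B
  simp only [unitaryAverage, conj_mul_mul]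
  rw [integral_mul_const_of_integrable (conj_integrable.const_mul R₁),
    integral_const_mul_of_integrable conj_integrable]

variable [CompleteSpace E]

theorem unitaryAverage_of_mem_centralizer [IsProbabilityMeasure μ] (hu : Continuous u) {R : E}
    (hR : R ∈ Set.centralizer (Set.range fun g => (u g : E))) : unitaryAverage μ u R = R := by
  simpa [unitaryAverage_one] using
    unitaryAverage_mul_mul μ hu hR (Set.one_mem_centralizer (M := E)) 1

variable [MeasurableMul G] [μ.IsMulLeftInvariant] [IsProbabilityMeasure μ]

theorem unitaryAverage_comp_self (hu : Continuous u) :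
    unitaryAverage μ u ∘ unitaryAverage μ u = unitaryAverage μ u :=
  funext fun B =>
    unitaryAverage_of_mem_centralizer μ hu (unitaryAverage_mem_centralizer μ hu B)

theorem range_unitaryAverage (hu : Continuous u) :
    Set.range (unitaryAverage μ u) = Set.centralizer (Set.range fun g => (u g : E)) := by
  refine Set.Subset.antisymm ?_ fun R hR => ⟨R, unitaryAverage_of_mem_centralizer μ hu hR⟩
  rintro _ ⟨B, rfl⟩
  exact unitaryAverage_mem_centralizer μ hu B

end UnitaryAverage

theorem OpMatrixNonneg.map_mul_mul_star {n : ℕ} {M : Matrix (Fin n) (Fin n) (H →L[ℂ] H)}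
    (hM : OpMatrixNonneg M) (T : H →L[ℂ] H) :
    OpMatrixNonneg (M.map fun B => T * B * star T) := fun v => by
  simpa [ContinuousLinearMap.star_eq_adjoint, ContinuousLinearMap.adjoint_inner_left] using
    hM fun i => star T (v i)

theorem OpMatrixNonneg.integral {X : Type*} [MeasurableSpace X] {μ : Measure X} {n : ℕ}
    {F : X → Matrix (Fin n) (Fin n) (H →L[ℂ] H)} (hF : ∀ i j, Integrable (fun x => F x i j) μ)
    (hF_nonneg : ∀ᵐ x ∂μ, OpMatrixNonneg (F x)) :
    OpMatrixNonneg (Matrix.of fun i j => ∫ x, F x i j ∂μ) := fun v => by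
  have hF_apply (i j) : Integrable (fun x => F x i j (v j)) μ :=
    (hF i j).apply_continuousLinearMap (v j)
  have hF_inner (i j) : Integrable (fun x => ⟪v i, F x i j (v j)⟫_ℂ) μ :=
    (hF_apply i j).const_inner (v i)
  calc (0 : ℂ) ≤ ∫ x, ∑ i, ∑ j, ⟪v i, F x i j (v j)⟫_ℂ ∂μ :=
        integral_nonneg_of_ae (hF_nonneg.mono fun x hx => hx v)
    _ = ∑ i, ∑ j, ∫ x, ⟪v i, F x i j (v j)⟫_ℂ ∂μ := by
        simp only [integral_finsetSum, integrable_finsetSum, hF_inner, implies_true]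
    _ = ∑ i, ∑ j, ⟪v i, (∫ x, F x i j ∂μ) (v j)⟫_ℂ := by
        simp only [ContinuousLinearMap.integral_apply (hF _ _), integral_inner (hF_apply _ _)]

theorem isCompletelyPositiveMap_unitaryAverage {G : Type*} [Group G] [TopologicalSpace G]
    [CompactSpace G] [MeasurableSpace G] [OpensMeasurableSpace G] (μ : Measure G)
    [IsFiniteMeasure μ] {u : G →* unitary (H →L[ℂ] H)} (hu : Continuous u) :
    IsCompletelyPositiveMap (unitaryAverage μ u) :=
  ⟨isLinearMap_unitaryAverage μ ℂ hu, fun _ M hM =>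
    OpMatrixNonneg.integral (fun i j => integrable_unitary_conj μ hu (M i j))
      (.of_forall fun g => hM.map_mul_mul_star (u g))⟩

/-- **Lemma 2.**  If `A` is a finite-dimensional unital C*-subalgebra of `B(H)` (a
star-closed unital subalgebra that is finite-dimensional as a complex vector space), then
there is a unital completely positive projection `Φ` of `B(H)` onto the commutant `A'`
which is an `A'`-bimodule map. -/
theorem exists_cp_projection_onto_commutant_of_finiteDimensional
    (A : StarSubalgebra ℂ (H →L[ℂ] H)) [FiniteDimensional ℂ A] :
    ∃ Φ : (H →L[ℂ] H) → (H →L[ℂ] H),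
      IsCompletelyPositiveMap Φ ∧ Φ 1 = 1 ∧ Φ ∘ Φ = Φ ∧
      Set.range Φ = Set.centralizer (A : Set (H →L[ℂ] H)) ∧
      ∀ R₁ ∈ Set.centralizer (A : Set (H →L[ℂ] H)),
        ∀ R₂ ∈ Set.centralizer (A : Set (H →L[ℂ] H)),
          ∀ B : H →L[ℂ] H, Φ (R₁ * B * R₂) = R₁ * Φ B * R₂ := by
  have : IsClosed (A : Set (H →L[ℂ] H)) :=
    Submodule.closed_of_finiteDimensional (Subalgebra.toSubmodule A.toSubalgebra)
  have : ProperSpace A := FiniteDimensional.proper ℂ A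
  have : CompactSpace (unitary A) := compactSpace_unitary A
  borelize ↥(unitary A)
  let μ : Measure (unitary A) := Measure.haarMeasure ⊤
  have : IsProbabilityMeasure μ := isProbabilityMeasure_haarMeasure_top (unitary A)
  let u : unitary A →* unitary (H →L[ℂ] H) :=
    ((A.subtype : A →* (H →L[ℂ] H)).comp (unitary A).subtype).codRestrict _
      fun g => Unitary.map_mem A.subtype g.2
  have coe_u (g : unitary A) : (u g : H →L[ℂ] H) = (g : A) := rfl
  have hu : Continuous u :=
    (continuous_subtype_val.comp continuous_subtype_val).subtype_mk _
  have centralizer_eq : Set.centralizer (Set.range fun g => (u g : H →L[ℂ] H)) =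
      Set.centralizer (A : Set (H →L[ℂ] H)) := by
    simpa [Set.image_eq_range, coe_u] using centralizer_image_unitary A.subtype.toAlgHom.toLinearMap
  rw [← centralizer_eq]
  exact ⟨unitaryAverage μ u, isCompletelyPositiveMap_unitaryAverage μ hu, unitaryAverage_one μ u,
    unitaryAverage_comp_self μ hu, range_unitaryAverage μ hu,
    fun _ hR₁ _ hR₂ => unitaryAverage_mul_mul μ hu hR₁ hR₂⟩

end
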